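/- Let (V, Φ) be a reduced irreducible root system with base Δ and let α ∈ Δ. The following are equivalent: (1) the fundamental weight η(α) (the element of the span of Φ dual to the coroot basis Δ^∨, i.e. satisfying ⟨η(α), α'^∨⟩ = δ_{α,α'} for α' ∈ Δ) is quasi-constant; (2) α is special or co-special; (3) the unique Δ-dominant element of the Weyl-group orbit W·α equals the unique (Δ \ {α})-dominant element of the orbit W_α·α, i.e. dom(α) = dom_α(α). -/

import Mathlib

open scoped BigOperators

/-- A reduced irreducible root system, with a choice of base of simple roots,
in a finite-dimensional `ℚ`-vector space `V` equipped with a positive definite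
symmetric bilinear form. -/
structure RootSystemBase (V : Type*) [AddCommGroup V] [Module ℚ V] : Type _ where
  /-- the symmetric bilinear form `( , )` -/
  B : V →ₗ[ℚ] V →ₗ[ℚ] ℚ
  B_symm : ∀ u v : V, B u v = B v u
  B_posdef : ∀ v : V, v ≠ 0 → 0 < B v v
  /-- the (finite) set of roots -/
  Φ : Finset V
  zero_notMem : (0 : V) ∉ Φ
  span_top : Submodule.span ℚ (Φ : Set V) = ⊤
  reflect_mem : ∀ β ∈ Φ, ∀ γ ∈ Φ, γ - (2 * B β γ / B β β) • β ∈ Φ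
  integral : ∀ β ∈ Φ, ∀ γ ∈ Φ, ∃ n : ℤ, 2 * B β γ / B β β = (n : ℚ)
  reduced : ∀ β ∈ Φ, ∀ c : ℚ, c • β ∈ Φ → c = 1 ∨ c = -1
  irreducible : ∀ s ⊆ Φ, s.Nonempty →
    (∀ β ∈ s, ∀ γ ∈ Φ, γ ∉ s → B β γ = 0) → s = Φ
  /-- the base of simple roots -/
  Δ : Finset V
  Δ_sub : Δ ⊆ Φ
  Δ_indep : LinearIndependent ℚ (Subtype.val : {x : V // x ∈ Δ} → V)
  /-- `coord v α` is the coefficient of the simple root `α` when `v` is written in the basis `Δ` -/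
  coord : V → V → ℚ
  coord_spec : ∀ v : V, v = ∑ α ∈ Δ, coord v α • α
  coord_int : ∀ β ∈ Φ, ∀ α ∈ Δ, ∃ n : ℤ, coord β α = (n : ℚ)
  pos_or_neg : ∀ β ∈ Φ, (∀ α ∈ Δ, 0 ≤ coord β α) ∨ (∀ α ∈ Δ, coord β α ≤ 0)

namespace RootSystemBase

variable {V : Type*} [AddCommGroup V] [Module ℚ V] (P : RootSystemBase V)

/-- the coroot `β^∨ = 2β/(β,β)` -/
noncomputable def coroot (β : V) : V := (2 / P.B β β) • β

/-- `m^∨_β(α)`: the coefficient of `α^∨` when `β^∨` is written in the basis `Δ^∨` -/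
noncomputable def corootMult (β α : V) : ℚ := P.coord (P.coroot β) α * (P.B α α / 2)

/-- the positive roots `Φ⁺` determined by the base `Δ` -/
noncomputable def posRoots : Finset V := P.Φ.filter (fun β => ∀ α ∈ P.Δ, 0 ≤ P.coord β α)

/-- a root is long if its length is maximal -/
def IsLong (β : V) : Prop := ∀ γ ∈ P.Φ, P.B γ γ ≤ P.B β β

/-- a root is short if its length is minimal -/
def IsShort (β : V) : Prop := ∀ γ ∈ P.Φ, P.B β β ≤ P.B γ γ

/-- `h` is the highest root: every (positive) root has smaller multiplicities -/
def IsHighestRoot (h : V) : Prop :=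
  h ∈ P.Φ ∧ ∀ β ∈ P.posRoots, ∀ α ∈ P.Δ, P.coord β α ≤ P.coord h α

/-- `h₂` is the root whose coroot is the highest root of the dual system `Φ^∨` -/
def IsDualHighest (h₂ : V) : Prop :=
  h₂ ∈ P.Φ ∧ ∀ β ∈ P.posRoots, ∀ α ∈ P.Δ, P.corootMult β α ≤ P.corootMult h₂ α

/-- a simple root `α` is special if `m_{α^h}(α) = 1` -/
def IsSpecial (α : V) : Prop :=
  α ∈ P.Δ ∧ ∀ h : V, P.IsHighestRoot h → P.coord h α = 1

/-- a simple root `α` is co-special if `m^∨_{α^{h₂}}(α) = 1` -/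
def IsCospecial (α : V) : Prop :=
  α ∈ P.Δ ∧ ∀ h₂ : V, P.IsDualHighest h₂ → P.corootMult h₂ α = 1

/-- the reflection `s_β` in a root `β` (junk value `id` if `(β,β) = 0`) -/
noncomputable def refl (β : V) : V ≃ₗ[ℚ] V :=
  if h : P.B β β ≠ 0 then
    Module.reflection (x := β) (f := (2 / P.B β β) • P.B β)
      (by simp only [LinearMap.smul_apply, smul_eq_mul]; field_simp)
  else LinearEquiv.refl ℚ V

/-- the Weyl group `W`, as a group of linear automorphisms of `V` -/
noncomputable def weylGroup : Subgroup (V ≃ₗ[ℚ] V) :=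
  Subgroup.closure { g | ∃ β ∈ P.Φ, g = P.refl β }

/-- the Weyl group `W_α` of the maximal Levi determined by `α ∈ Δ`, generated by the
simple reflections `s_{α'}`, `α' ∈ Δ \ {α}` -/
noncomputable def leviWeyl (α : V) : Subgroup (V ≃ₗ[ℚ] V) :=
  Subgroup.closure { g | ∃ α' ∈ P.Δ, α' ≠ α ∧ g = P.refl α' }

/-- `v` is `Δ`-dominant -/
def IsDominant (v : V) : Prop := ∀ α ∈ P.Δ, 0 ≤ P.B v α

/-- `v` is `(Δ \ {α})`-dominant -/
def IsDominantAway (α v : V) : Prop := ∀ α' ∈ P.Δ, α' ≠ α → 0 ≤ P.B v α'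

/-- `χ` is quasi-constant -/
def IsQuasiConstant (χ : V) : Prop :=
  ∀ β ∈ P.Φ, P.B χ (P.coroot β) ≠ 0 → ∀ w ∈ P.weylGroup,
    P.B χ (w (P.coroot β)) / P.B χ (P.coroot β) ∈ ({-1, 0, 1} : Set ℚ)

end RootSystemBase

/-!
Write `⟨i, k^∨⟩` for the pairing of a root with a coroot. The idea is that in a reduced irreducible
root system a dominant root `i` is either the highest root `h` or the root `k` whose coroot is
highest: otherwise `⟨h, i^∨⟩` and `⟨i, k^∨⟩` are at least `2`, so the transposed pairings are `1`,
and the identity `⟨h, i^∨⟩ ⟨i, k^∨⟩ ⟨k, h^∨⟩ = ⟨i, h^∨⟩ ⟨k, i^∨⟩ ⟨h, k^∨⟩` forces `⟨h, k^∨⟩ ≥ 4`.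

The group `W_α` preserves the multiplicity of `α` in roots and in coroots, which is `1` at `α`
itself. Hence a dominant root in `W_α · α` makes `α` special or co-special; conversely, if `α` is
special (or co-special), the `(Δ \ {α})`-dominant root in `W_α · α` also pairs nonnegatively with
`α^∨`, as reflecting it in `α` may not raise the multiplicity of `α` above `1`.

The fundamental weight of `α` reads off the multiplicity of `α^∨` in coroots. Within a Weyl orbit
this multiplicity is proportional to that of `α` in roots, and if it is quasi-constant, then both
are equal to `1` at the dominant root of the orbit of `α`.
-/

namespace BasedRootPairing

open RootPairing Module

variable {ι R M N : Type*} [CommRing R] [AddCommGroup M] [Module R M] [AddCommGroup N] [Module R N]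
  {P : RootPairing ι R M N} {b : P.Base} {i k l : ι}

lemma root_reflectionPerm_eq [P.IsCrystallographic] (i l : ι) :
    P.root (P.reflectionPerm l i) = P.root i + (-P.pairingIn ℤ i l) • P.root l := by
  simp [reflection_apply_root, ← P.algebraMap_pairingIn ℤ, Int.cast_smul_eq_zsmul, sub_eq_add_neg]

/-- The group of permutations of the roots generated by the reflections in the roots of `s`: a
parabolic subgroup of the Weyl group if `s` consists of simple roots, and the Weyl group if `s` is
everything. -/
def reflectionGroup (P : RootPairing ι R M N) (s : Set ι) : Subgroup (Equiv.Perm ι) :=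
  Subgroup.closure (P.reflectionPerm '' s)

lemma reflectionGroup_mono {s t : Set ι} (h : s ⊆ t) : reflectionGroup P s ≤ reflectionGroup P t :=
  Subgroup.closure_mono (Set.image_mono h)

section RootLength

variable [P.IsCrystallographic] [CharZero R] [Fintype ι]

lemma rootLength_reflectionPerm (i l : ι) :
    (P.posRootForm ℤ).rootLength (P.reflectionPerm l i) = (P.posRootForm ℤ).rootLength i := by
  apply FaithfulSMul.algebraMap_injective ℤ R
  rw [RootPositiveForm.algebraMap_rootLength, RootPositiveForm.algebraMap_rootLength,
    root_reflectionPerm]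
  exact P.rootForm_reflection_reflection_apply l _ _

lemma rootLength_eq_of_mem_reflectionGroup {s : Set ι} {w : Equiv.Perm ι}
    (hw : w ∈ reflectionGroup P s) (i : ι) :
    (P.posRootForm ℤ).rootLength (w i) = (P.posRootForm ℤ).rootLength i := by
  induction hw using Subgroup.closure_induction generalizing i with
  | mem _ h => obtain ⟨l, -, rfl⟩ := h; exact rootLength_reflectionPerm i l
  | one => rfl
  | mul _ _ _ _ hx hy => rw [Equiv.Perm.mul_apply, hx, hy]
  | inv x _ hx => rw [← hx (x⁻¹ i), ← Equiv.Perm.mul_apply, mul_inv_cancel, Equiv.Perm.one_apply]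

end RootLength

lemma pairingIn_cocycle [P.IsCrystallographic] [CharZero R] [Finite ι] (i k l : ι) :
    P.pairingIn ℤ i k * P.pairingIn ℤ k l * P.pairingIn ℤ l i =
      P.pairingIn ℤ k i * P.pairingIn ℤ l k * P.pairingIn ℤ i l := by
  have := Fintype.ofFinite ι
  let B := P.posRootForm ℤ
  have hB (i) : B.rootLength i ≠ 0 := (B.rootLength_pos i).ne'
  have hik := B.pairingIn_mul_eq_pairingIn_mul_swap i k
  have hkl := B.pairingIn_mul_eq_pairingIn_mul_swap k l
  have hli := B.pairingIn_mul_eq_pairingIn_mul_swap l i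
  refine mul_right_cancel₀ (mul_ne_zero (mul_ne_zero (hB i) (hB k)) (hB l)) ?_
  calc  _ = (P.pairingIn ℤ i k * B.rootLength k) * (P.pairingIn ℤ k l * B.rootLength l) *
        (P.pairingIn ℤ l i * B.rootLength i) := by ring
    _ = (P.pairingIn ℤ k i * B.rootLength i) * (P.pairingIn ℤ l k * B.rootLength k) *
        (P.pairingIn ℤ i l * B.rootLength l) := by rw [hik, hkl, hli]
    _ = _ := by ring

lemma isReduced_flip [CharZero R] [Finite ι] [IsDomain R] [P.IsReduced] : P.flip.IsReduced := by
  have : IsReflexive R M := .of_isPerfPair P.toLinearMap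
  have : IsReflexive R N := .of_isPerfPair P.flip.toLinearMap
  infer_instance

lemma pairingIn_swap_eq_one [P.IsCrystallographic] [CharZero R] [Finite ι] [IsDomain R]
    [P.IsReduced] (hne : i ≠ k) (h : 2 ≤ P.pairingIn ℤ i k) : P.pairingIn ℤ k i = 1 := by
  have hmem := P.pairingIn_pairingIn_mem_set_of_isCrystal_of_isRed i k
  have : IsReflexive R M := .of_isPerfPair P.toLinearMap
  have h22 := (P.pairingIn_two_two_iff ℤ i k).not.mpr hne
  simp only [Set.mem_insert_iff, Set.mem_singleton_iff, Prod.mk.injEq] at hmem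
  omega

variable [CharZero R]

/-- The multiplicity of the simple root `j` in the root `i`. Multiplicities of simple coroots in
coroots are those of the flipped base, `mult b.flip`. -/
noncomputable def mult (b : P.Base) (i : ι) (j : b.support) : ℤ :=
  b.toWeightBasisInt.repr (P.rootSpanMem ℤ i) j

lemma root_eq_sum_mult (i : ι) : P.root i = ∑ j : b.support, mult b i j • P.root j := by
  simpa [mult] using congr(($(b.toWeightBasisInt.sum_repr (P.rootSpanMem ℤ i)) : M)).symm

lemma smul_mult_eq_of_smul_root_eq_sum {z : ℤ} {f : b.support → ℤ}
    (h : z • P.root i = ∑ j : b.support, f j • P.root j) : z • mult b i = f := by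
  have h' : z • P.rootSpanMem ℤ i = ∑ j, f j • b.toWeightBasisInt j := by
    ext1
    simpa using h
  ext j
  rw [← b.toWeightBasisInt.repr_sum_self f, ← h', map_zsmul]
  rfl

lemma mult_eq_of_root_eq_sum {f : b.support → ℤ}
    (h : P.root i = ∑ j : b.support, f j • P.root j) : mult b i = f := by
  simpa using smul_mult_eq_of_smul_root_eq_sum (z := 1) (by rwa [one_smul])

lemma mult_add_zsmul {z : ℤ} (h : P.root k = P.root i + z • P.root l) :
    mult b k = mult b i + z • mult b l := by
  have h' : P.rootSpanMem ℤ k = P.rootSpanMem ℤ i + z • P.rootSpanMem ℤ l := Subtype.ext h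
  ext j
  rw [mult, h', map_add, map_zsmul]
  rfl

lemma mult_injective : Function.Injective (mult b) := fun i k h ↦ P.root.injective <| by
  rw [root_eq_sum_mult (b := b) i, root_eq_sum_mult (b := b) k, h]

lemma mult_ne_zero (i : ι) : mult b i ≠ 0 := fun h ↦
  P.ne_zero i <| by simpa [h] using root_eq_sum_mult (b := b) i

lemma mult_support [DecidableEq b.support] (j : b.support) : mult b j = Pi.single j 1 :=
  mult_eq_of_root_eq_sum (by simp [Pi.single_apply])

lemma mult_self (j : b.support) : mult b j j = 1 := by
  classical rw [mult_support, Pi.single_eq_same]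

lemma mult_nonneg_or_nonpos (i : ι) : 0 ≤ mult b i ∨ mult b i ≤ 0 := by
  obtain ⟨f, -, hf, h⟩ := b.exists_root_eq_sum_int i
  have hmult : mult b i = fun j : b.support ↦ f j :=
    mult_eq_of_root_eq_sum (by rw [h, Finset.sum_coe_sort b.support (fun j ↦ f j • P.root j)])
  rw [hmult]
  exact hf.imp (fun h j ↦ h.le j) (fun h j ↦ h.le j)

variable [P.IsCrystallographic]

lemma mult_reflectionPerm (i l : ι) :
    mult b (P.reflectionPerm l i) = mult b i - P.pairingIn ℤ i l • mult b l := by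
  rw [mult_add_zsmul (root_reflectionPerm_eq i l), neg_smul, sub_eq_add_neg]

lemma mult_reflectionPerm_self (i : ι) : mult b (P.reflectionPerm i i) = -mult b i := by
  rw [mult_reflectionPerm, pairingIn_same, two_smul]
  abel

lemma pairingIn_eq_sum_mult (i k : ι) :
    P.pairingIn ℤ i k = ∑ j : b.support, mult b i j * P.pairingIn ℤ j k := by
  apply FaithfulSMul.algebraMap_injective ℤ R
  simp only [map_sum, map_mul, P.algebraMap_pairingIn]
  simpa using congr(P.toLinearMap $(root_eq_sum_mult (b := b) i) (P.coroot k))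

lemma mult_eq_of_mem_reflectionGroup_diff {j : b.support} {w : Equiv.Perm ι}
    (hw : w ∈ reflectionGroup P (b.support \ {(j : ι)})) (i : ι) :
    mult b (w i) j = mult b i j := by
  classical
  induction hw using Subgroup.closure_induction generalizing i with
  | mem _ h =>
    obtain ⟨l, ⟨hl, hlj⟩, rfl⟩ := h
    have hlj' : (⟨l, hl⟩ : b.support) ≠ j := fun h ↦ hlj congr(($h : ι))
    simp [mult_reflectionPerm, mult_support ⟨l, hl⟩, hlj'.symm]
  | one => rfl
  | mul _ _ _ _ hx hy => rw [Equiv.Perm.mul_apply, hx, hy]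
  | inv x _ hx => rw [← hx (x⁻¹ i), ← Equiv.Perm.mul_apply, mul_inv_cancel, Equiv.Perm.one_apply]

lemma mult_flip_mul_rootLength [Fintype ι] (i : ι) (j : b.support) :
    mult b.flip i j * (P.posRootForm ℤ).rootLength i =
      mult b i j * (P.posRootForm ℤ).rootLength j := by
  let L := (P.posRootForm ℤ).rootLength
  have hL (i : ι) : L i • P.coroot i = 2 • P.Polarization (P.root i) := by
    rw [← P.rootForm_self_smul_coroot, ← Int.cast_smul_eq_zsmul R]
    exact congrArg (· • P.coroot i) ((P.posRootForm ℤ).algebraMap_rootLength i)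
  have h : L i • P.coroot i = ∑ j : b.support, (mult b i j * L j) • P.coroot j := by
    rw [hL, root_eq_sum_mult (b := b) i, map_sum, Finset.smul_sum]
    refine Finset.sum_congr rfl fun j _ ↦ ?_
    rw [mul_smul, hL, map_zsmul, smul_comm]
  rw [mul_comm]
  exact congrFun (smul_mult_eq_of_smul_root_eq_sum (P := P.flip) (b := b.flip) h) j

lemma mult_flip_mul_mult_eq [Finite ι] {w : Equiv.Perm ι} {s : Set ι} (hw : w ∈ reflectionGroup P s)
    (i : ι) (j : b.support) :
    mult b.flip (w i) j * mult b i j = mult b (w i) j * mult b.flip i j := by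
  have := Fintype.ofFinite ι
  have hL (i) := ((P.posRootForm ℤ).rootLength_pos i).ne'
  have hwi := mult_flip_mul_rootLength (b := b) (w i) j
  rw [rootLength_eq_of_mem_reflectionGroup hw] at hwi
  have hi := mult_flip_mul_rootLength (b := b) i j
  refine mul_right_cancel₀ (mul_ne_zero (hL i) (hL j)) ?_
  linear_combination (mult b i j * (P.posRootForm ℤ).rootLength j) * hwi -
    (mult b (w i) j * (P.posRootForm ℤ).rootLength j) * hi

/-- The root `i` is dominant. Since `P.pairingIn ℤ i j` and `P.pairingIn ℤ j i` have the same sign,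
this is the same as dominance of the coroot of `i`. -/
def IsDominant (b : P.Base) (i : ι) : Prop := ∀ j ∈ b.support, 0 ≤ P.pairingIn ℤ i j

omit [CharZero R] in
lemma IsDominant.pairingIn_nonneg (h : IsDominant b i) (j : b.support) : 0 ≤ P.pairingIn ℤ i j :=
  h j j.2

/-- The root `i` is the highest root. The root whose coroot is highest is described by
`IsHighest b.flip`. -/
def IsHighest (b : P.Base) (i : ι) : Prop := ∀ k, mult b k ≤ mult b i

/-- The simple root `j` is special: its multiplicity in every root, equivalently in the highest
root, is at most one in absolute value. Co-special simple roots are described by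
`IsSpecial b.flip`. -/
def IsSpecial (b : P.Base) (j : b.support) : Prop := ∀ i, |mult b i j| ≤ 1

/-- The function `f` on the roots is quasi-constant: the nonzero values it takes on an orbit of the
Weyl group agree up to sign. -/
def IsQuasiConstant (P : RootPairing ι R M N) (f : ι → ℤ) : Prop :=
  ∀ i, f i ≠ 0 → ∀ w ∈ reflectionGroup P Set.univ, f (w i) ∈ ({-f i, 0, f i} : Set ℤ)

omit [P.IsCrystallographic] in
lemma IsSpecial.isQuasiConstant {j : b.support} (hj : IsSpecial b j) :
    IsQuasiConstant P (mult b · j) := by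
  intro i hi w _
  dsimp only at hi
  have := abs_le.mp (hj i)
  have := abs_le.mp (hj (w i))
  simp only [Set.mem_insert_iff, Set.mem_singleton_iff]
  omega

lemma IsHighest.isSpecial_iff (h : IsHighest b i) {j : b.support} :
    IsSpecial b j ↔ mult b i j = 1 := by
  refine ⟨fun hs ↦ le_antisymm (abs_le.mp (hs i)).2 ((mult_self j).ge.trans (h j j)),
    fun hj k ↦ abs_le.mpr ⟨neg_le.mp ?_, hj ▸ h k j⟩⟩
  rw [← Pi.neg_apply, ← mult_reflectionPerm_self, ← hj]
  exact h _ j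

lemma isDominant_of_maximal (hi : Maximal (· ∈ Set.range (mult b)) (mult b i)) :
    IsDominant b i := by
  classical
  intro j hj
  by_contra! hlt
  have hle : mult b i ≤ mult b (P.reflectionPerm j i) := by
    rw [mult_reflectionPerm, mult_support ⟨j, hj⟩, le_sub_self_iff]
    exact smul_nonpos_of_nonpos_of_nonneg hlt.le (Pi.single_nonneg.mpr zero_le_one)
  have := hi.eq_of_le ⟨_, rfl⟩ hle
  rw [mult_reflectionPerm, eq_comm, sub_eq_self] at this
  exact hlt.ne ((smul_eq_zero.mp this).resolve_right (mult_ne_zero j))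

lemma IsHighest.isDominant (hi : IsHighest b i) : IsDominant b i :=
  isDominant_of_maximal ⟨⟨i, rfl⟩, fun _ ⟨k, hk⟩ _ ↦ hk ▸ hi k⟩

lemma isHighest_iff_forall_nonneg :
    IsHighest b i ↔ ∀ k, 0 ≤ mult b k → mult b k ≤ mult b i := by
  refine ⟨fun h k _ ↦ h k, fun h k ↦ ?_⟩
  obtain hk | hk := mult_nonneg_or_nonpos (b := b) k
  · exact h k hk
  · have hneg : 0 ≤ -mult b k := neg_nonneg.mpr hk
    rw [← mult_reflectionPerm_self] at hneg
    exact hk.trans (hneg.trans (h _ hneg))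

section Finite

variable [Finite ι]

lemma mult_flip_nonneg_iff : 0 ≤ mult b.flip i ↔ 0 ≤ mult b i := by
  have := Fintype.ofFinite ι
  have hL (i) := (P.posRootForm ℤ).rootLength_pos i
  refine forall_congr' fun j ↦ ?_
  have h := mult_flip_mul_rootLength (b := b) i j
  exact ⟨fun hj ↦ nonneg_of_mul_nonneg_left (h ▸ mul_nonneg hj (hL i).le) (hL j),
    fun hj ↦ nonneg_of_mul_nonneg_left (h ▸ mul_nonneg hj (hL j).le) (hL i)⟩

lemma exists_mem_reflectionGroup_forall_pairingIn_nonneg {s : Set ι} (hs : s ⊆ b.support) (i : ι) :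
    ∃ w ∈ reflectionGroup P s, ∀ j ∈ s, 0 ≤ P.pairingIn ℤ (w i) j := by
  obtain ⟨w, hw⟩ := Finite.exists_max fun w : reflectionGroup P s ↦ b.height (w.1 i)
  refine ⟨w, w.2, fun j hj ↦ ?_⟩
  have hj' : P.reflectionPerm j ∈ reflectionGroup P s := Subgroup.subset_closure ⟨j, hj, rfl⟩
  have := hw (⟨_, hj'⟩ * w)
  rw [Subgroup.coe_mul, Equiv.Perm.mul_apply, b.height_add_zsmul (root_reflectionPerm_eq _ _),
    Base.height_one_of_mem_support (hs hj), smul_eq_mul] at this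
  linarith

lemma isDominant_flip_iff : IsDominant b.flip i ↔ IsDominant b i :=
  forall₂_congr fun j _ ↦ not_lt.symm.trans <|
    (P.pairingIn_lt_zero_iff ℤ (i := j) (j := i)).not.trans not_lt

lemma IsDominant.pairingIn_nonneg' (h : IsDominant b i) (j : b.support) :
    0 ≤ P.pairingIn ℤ j i := (isDominant_flip_iff.mpr h) j j.2

lemma IsDominant.mult_nonneg (h : IsDominant b i) : 0 ≤ mult b i := by
  refine (mult_nonneg_or_nonpos i).resolve_right fun hi ↦ ?_
  have := Finset.sum_nonpos fun j (_ : j ∈ Finset.univ) ↦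
    mul_nonpos_of_nonpos_of_nonneg (hi j) (h.pairingIn_nonneg' j)
  rw [← pairingIn_eq_sum_mult, pairingIn_same] at this
  omega

lemma IsHighest.two_le_pairingIn (hi : IsHighest b i) (hk : IsDominant b k) :
    2 ≤ P.pairingIn ℤ i k := by
  rw [← P.pairingIn_same ℤ k, pairingIn_eq_sum_mult (b := b), pairingIn_eq_sum_mult (b := b) i]
  exact Finset.sum_le_sum fun j _ ↦ mul_le_mul_of_nonneg_right (hi k j) (hk.pairingIn_nonneg' j)

lemma IsSpecial.exists_isDominant {j : b.support} (hj : IsSpecial b j) :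
    ∃ w ∈ reflectionGroup P (b.support \ {(j : ι)}), IsDominant b (w j) := by
  obtain ⟨w, hw, hdom⟩ := exists_mem_reflectionGroup_forall_pairingIn_nonneg
    (Set.sdiff_subset (s := (b.support : Set ι)) (t := {(j : ι)})) j
  refine ⟨w, hw, fun k hk ↦ ?_⟩
  obtain hkj | rfl := ne_or_eq k j
  · exact hdom k ⟨hk, hkj⟩
  have hmult : mult b (P.reflectionPerm j (w j)) j = 1 - P.pairingIn ℤ (w j) j := by
    simp [mult_reflectionPerm, mult_eq_of_mem_reflectionGroup_diff hw, mult_self]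
  linarith [(abs_le.mp (hj (P.reflectionPerm j (w j)))).2]

lemma mult_flip_ne_zero_iff {j : b.support} : mult b.flip i j ≠ 0 ↔ mult b i j ≠ 0 := by
  have := Fintype.ofFinite ι
  have hL (i) := ((P.posRootForm ℤ).rootLength_pos i).ne'
  rw [← mul_ne_zero_iff_right (hL i), mult_flip_mul_rootLength, mul_ne_zero_iff_right (hL j)]

lemma IsQuasiConstant.mult_flip {j : b.support} (h : IsQuasiConstant P (mult b · j)) :
    IsQuasiConstant P (mult b.flip · j) := by
  intro i hi w hw
  replace hi := mult_flip_ne_zero_iff.mp hi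
  have hmul := mult_flip_mul_mult_eq (b := b) hw i j
  obtain hneg | hzero | heq : mult b (w i) j = -mult b i j ∨ mult b (w i) j = 0 ∨
    mult b (w i) j = mult b i j := h i hi w hw
  · exact .inl (mul_right_cancel₀ hi (by linear_combination hmul + mult b.flip i j * hneg))
  · exact .inr (.inl (mul_right_cancel₀ hi (by linear_combination hmul + mult b.flip i j * hzero)))
  · exact .inr (.inr (mul_right_cancel₀ hi (by linear_combination hmul + mult b.flip i j * heq)))

end Finite

variable [Finite ι] [IsDomain R] [P.IsReduced] [P.IsIrreducible]

lemma IsDominant.mult_pos (h : IsDominant b i) (j : b.support) : 0 < mult b i j := by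
  refine (h.mult_nonneg j).lt_of_ne' fun hj ↦ mult_ne_zero (b := b) i ?_
  ext k
  refine b.induction_on_cartanMatrix (mult b i · = 0) hj fun m k hm hkm ↦ ?_
  have hle (l : b.support) : mult b i l * P.pairingIn ℤ l m ≤ 0 := by
    obtain rfl | hl := eq_or_ne l m
    · simp [hm]
    · exact mul_nonpos_of_nonneg_of_nonpos (h.mult_nonneg l)
        (b.pairingIn_le_zero_of_ne (Subtype.coe_ne_coe.mpr hl) l.2 m.2)
  have hsum : ∑ l, mult b i l * P.pairingIn ℤ l m = 0 :=
    (Finset.sum_nonpos fun l _ ↦ hle l).antisymm <|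
      (h.pairingIn_nonneg m).trans_eq (pairingIn_eq_sum_mult i m)
  have := (Finset.sum_eq_zero_iff_of_nonpos fun l _ ↦ hle l).mp hsum k (Finset.mem_univ k)
  exact (mul_eq_zero.mp this).resolve_right hkm

lemma IsDominant.pairingIn_pos (hi : IsDominant b i) (hk : IsDominant b k) :
    0 < P.pairingIn ℤ i k := by
  have hterm (j : b.support) : 0 ≤ mult b i j * P.pairingIn ℤ j k :=
    mul_nonneg (hi.mult_nonneg j) (hk.pairingIn_nonneg' j)
  rw [pairingIn_eq_sum_mult (b := b)]
  refine (Finset.sum_nonneg fun j _ ↦ hterm j).lt_of_ne' fun h ↦ ?_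
  have hzero (j : b.support) : P.pairingIn ℤ j k = 0 :=
    (mul_eq_zero.mp <| (Finset.sum_eq_zero_iff_of_nonneg fun j _ ↦ hterm j).mp h j
      (Finset.mem_univ j)).resolve_left (hi.mult_pos j).ne'
  have := pairingIn_eq_sum_mult (b := b) k k
  simp [hzero] at this

lemma eq_of_maximal (hi : Maximal (· ∈ Set.range (mult b)) (mult b i))
    (hk : Maximal (· ∈ Set.range (mult b)) (mult b k)) : i = k := by
  by_contra hne
  obtain ⟨l, hl⟩ := P.root_sub_root_mem_of_pairingIn_pos
    ((isDominant_of_maximal hi).pairingIn_pos (isDominant_of_maximal hk)) hne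
  have hl' : mult b l = mult b i - mult b k := by
    rw [mult_add_zsmul (i := i) (l := k) (z := -1) (by simp [hl, sub_eq_add_neg]), neg_one_smul,
      sub_eq_add_neg]
  obtain h | h := mult_nonneg_or_nonpos (b := b) l <;> rw [hl'] at h
  · exact hne (mult_injective (hk.eq_of_le ⟨i, rfl⟩ (sub_nonneg.mp h))).symm
  · exact hne (mult_injective (hi.eq_of_le ⟨k, rfl⟩ (sub_nonpos.mp h)))

variable (b) in
lemma exists_isHighest [Nonempty ι] : ∃ i, IsHighest b i := by
  have hmax (k : ι) : ∃ i, mult b k ≤ mult b i ∧ Maximal (· ∈ Set.range (mult b)) (mult b i) := by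
    obtain ⟨-, hle, ⟨⟨i, rfl⟩, hi⟩⟩ :=
      (Set.finite_range (mult b)).exists_le_maximal (Set.mem_range_self k)
    exact ⟨i, hle, ⟨i, rfl⟩, hi⟩
  obtain ⟨i, -, hi⟩ := hmax (Classical.arbitrary ι)
  refine ⟨i, fun l ↦ ?_⟩
  obtain ⟨m, hlm, hm⟩ := hmax l
  exact hlm.trans_eq (congrArg _ (eq_of_maximal hm hi))

lemma isSpecial_iff_forall_isHighest {j : b.support} :
    IsSpecial b j ↔ ∀ i, IsHighest b i → mult b i j = 1 := by
  refine ⟨fun hj i hi ↦ hi.isSpecial_iff.mp hj, fun h ↦ ?_⟩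
  have : Nonempty ι := ⟨j⟩
  obtain ⟨i, hi⟩ := exists_isHighest b
  exact hi.isSpecial_iff.mpr (h i hi)

lemma IsDominant.isHighest_or_isHighest_flip (hi : IsDominant b i) :
    IsHighest b i ∨ IsHighest b.flip i := by
  have : Nonempty ι := ⟨i⟩
  obtain ⟨h, hh⟩ := exists_isHighest b
  have := isReduced_flip (P := P)
  obtain ⟨k, hk⟩ := exists_isHighest b.flip
  by_contra! ⟨hih, hik⟩
  have hhi : h ≠ i := by rintro rfl; exact hih hh
  have hik : i ≠ k := by rintro rfl; exact hik hk
  have h₁ : 2 ≤ P.pairingIn ℤ h i := hh.two_le_pairingIn hi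
  have h₂ : 2 ≤ P.pairingIn ℤ i k := hk.two_le_pairingIn (isDominant_flip_iff.mpr hi)
  have h₃ : 0 < P.pairingIn ℤ k h :=
    (isDominant_flip_iff.mp hk.isDominant).pairingIn_pos hh.isDominant
  have hcocycle := pairingIn_cocycle (P := P) h i k
  rw [pairingIn_swap_eq_one hhi h₁, pairingIn_swap_eq_one hik h₂] at hcocycle
  have hle : P.pairingIn ℤ h k ≤ 3 := by
    have hmem := P.pairingIn_pairingIn_mem_set_of_isCrystal_of_isRed h k
    simp only [Set.mem_insert_iff, Set.mem_singleton_iff, Prod.mk.injEq] at hmem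
    omega
  nlinarith [mul_le_mul h₁ h₂ (by norm_num) (by linarith)]

theorem isSpecial_or_isSpecial_flip_iff_exists_isDominant (j : b.support) :
    IsSpecial b j ∨ IsSpecial b.flip j ↔
      ∃ w ∈ reflectionGroup P (b.support \ {(j : ι)}), IsDominant b (w j) := by
  refine ⟨?_, ?_⟩
  · rintro (h | h)
    · exact h.exists_isDominant
    · obtain ⟨w, hw, hdom⟩ := h.exists_isDominant
      exact ⟨w, hw, isDominant_flip_iff.mp hdom⟩
  · rintro ⟨w, hw, hdom⟩
    refine hdom.isHighest_or_isHighest_flip.imp (fun h ↦ h.isSpecial_iff.mpr ?_)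
      (fun h ↦ h.isSpecial_iff.mpr ?_)
    · rw [mult_eq_of_mem_reflectionGroup_diff hw, mult_self]
    · exact (mult_eq_of_mem_reflectionGroup_diff (b := b.flip) hw j).trans
        (mult_self (b := b.flip) j)

theorem isQuasiConstant_iff (j : b.support) :
    IsQuasiConstant P (mult b.flip · j) ↔ IsSpecial b j ∨ IsSpecial b.flip j := by
  refine ⟨fun h ↦ ?_, ?_⟩
  · obtain ⟨w, hw, hdom⟩ := exists_mem_reflectionGroup_forall_pairingIn_nonneg
      (b := b) subset_rfl j
    replace hw := reflectionGroup_mono (Set.subset_univ _) hw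
    have hj : mult b.flip j j = 1 := mult_self (b := b.flip) j
    have := isReduced_flip (P := P)
    have hpos : 0 < mult b.flip (w j) j := (isDominant_flip_iff.mpr hdom).mult_pos j
    have hwj : mult b.flip (w j) j = 1 := by
      have := h j (by simp [hj]) w hw
      simp only [hj, Set.mem_insert_iff, Set.mem_singleton_iff] at this
      omega
    refine (IsDominant.isHighest_or_isHighest_flip hdom).imp (fun hh ↦ hh.isSpecial_iff.mpr ?_)
      (fun hh ↦ hh.isSpecial_iff.mpr hwj)
    simpa [hj, hwj, mult_self] using (mult_flip_mul_mult_eq (b := b) hw j j).symm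
  · rintro (h | h)
    · exact h.isQuasiConstant.mult_flip
    · exact h.isQuasiConstant

end BasedRootPairing

namespace RootSystemBase

open RootPairing Module

variable {V : Type*} [AddCommGroup V] [Module ℚ V] (P : RootSystemBase V)

lemma sum_smul_mem_closure {s : Finset V} {c : V → ℚ} (hc : ∀ v ∈ s, 0 ≤ c v)
    (hint : ∀ v ∈ s, ∃ n : ℤ, c v = n) : ∑ v ∈ s, c v • v ∈ AddSubmonoid.closure (s : Set V) := by
  refine sum_mem fun v hv ↦ ?_
  obtain ⟨n, hn⟩ := hint v hv
  lift n to ℕ using by exact_mod_cast hn ▸ hc v hv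
  rw [hn, Int.cast_natCast, Nat.cast_smul_eq_nsmul]
  exact nsmul_mem (AddSubmonoid.subset_closure hv) n

lemma intCast_div_mem_iff {x y : ℤ} (hy : y ≠ 0) :
    (x / y : ℚ) ∈ ({-1, 0, 1} : Set ℚ) ↔ x ∈ ({-y, 0, y} : Set ℤ) := by
  have hy' : (y : ℚ) ≠ 0 := Int.cast_ne_zero.mpr hy
  simp only [Set.mem_insert_iff, Set.mem_singleton_iff, div_eq_iff hy', neg_one_mul, zero_mul,
    one_mul]
  norm_cast

lemma B_self_pos (i : P.Φ) : 0 < P.B i i :=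
  P.B_posdef i fun h ↦ P.zero_notMem (h ▸ i.2)

lemma B_coroot (v β : V) : P.B v (P.coroot β) = 2 * P.B β v / P.B β β := by
  rw [coroot, map_smul, P.B_symm v, smul_eq_mul]
  ring

lemma coroot_coroot (i : P.Φ) : P.coroot (P.coroot i) = i := by
  have := (P.B_self_pos i).ne'
  simp only [coroot, map_smul, LinearMap.smul_apply, smul_eq_mul, smul_smul]
  field_simp
  rw [one_smul]

lemma coroot_injective : Function.Injective fun i : P.Φ ↦ P.coroot i := fun i k h ↦ by
  rw [Subtype.ext_iff, ← P.coroot_coroot i, ← P.coroot_coroot k]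
  exact congrArg P.coroot h

lemma mem_closure_or_neg_mem_closure (i : P.Φ) :
    (i : V) ∈ AddSubmonoid.closure (P.Δ : Set V) ∨
      -(i : V) ∈ AddSubmonoid.closure (P.Δ : Set V) := by
  have hint := P.coord_int i i.2
  refine (P.pos_or_neg i i.2).imp (fun h ↦ ?_) (fun h ↦ ?_) <;> rw [P.coord_spec i]
  · exact sum_smul_mem_closure h hint
  · simp_rw [← Finset.sum_neg_distrib, ← neg_smul]
    refine sum_smul_mem_closure (fun α hα ↦ neg_nonneg.mpr (h α hα)) fun α hα ↦ ?_
    obtain ⟨n, hn⟩ := hint α hα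
    exact ⟨-n, by simp [hn]⟩

lemma refl_apply (i : P.Φ) (v : V) : P.refl i v = v - P.B v (P.coroot i) • (i : V) := by
  rw [refl, dif_pos (P.B_self_pos i).ne', Module.reflection_apply, B_coroot,
    LinearMap.smul_apply, smul_eq_mul]
  congr 2
  ring

lemma B_injective : Function.Injective P.B :=
  (injective_iff_map_eq_zero P.B).mpr fun v hv ↦ by
    by_contra hne
    exact (P.B_posdef v hne).ne' congr($hv v)

lemma weylGroup_eq_closure :
    P.weylGroup = Subgroup.closure ((fun l : P.Φ ↦ P.refl l) '' .univ) := by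
  refine congrArg Subgroup.closure (Set.ext fun g ↦ ⟨?_, ?_⟩)
  · rintro ⟨β, hβ, rfl⟩
    exact ⟨⟨β, hβ⟩, trivial, rfl⟩
  · rintro ⟨l, -, rfl⟩
    exact ⟨l, l.2, rfl⟩

variable [FiniteDimensional ℚ V]

instance isPerfPair_B : P.B.IsPerfPair :=
  have hflip : P.B.flip = P.B := LinearMap.ext₂ fun u v ↦ P.B_symm v u
  .of_injective P.B_injective (hflip.symm ▸ P.B_injective)

/-- The root pairing of `V` with itself under the form `B`, with roots `Φ` and coroots
`2β / (β, β)`. -/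
noncomputable def toRootPairing : RootPairing P.Φ ℚ V V :=
  .mk'' P.B (.subtype _) ⟨_, P.coroot_injective⟩
    (fun i ↦ by
      change P.B i (P.coroot i) = 2
      rw [B_coroot, mul_div_cancel_right₀ _ (P.B_self_pos i).ne'])
    (fun i ↦ by
      rintro - ⟨k, rfl⟩
      refine ⟨⟨_, P.reflect_mem i i.2 k k.2⟩, ?_⟩
      change (k : V) - (2 * P.B i k / P.B i i) • (i : V) = k - P.B k (P.coroot i) • (i : V)
      rw [B_coroot])
    (by simpa using P.span_top)

@[simp] lemma toRootPairing_root (i : P.Φ) : P.toRootPairing.root i = i := rfl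

@[simp] lemma toRootPairing_pairing (i k : P.Φ) :
    P.toRootPairing.pairing i k = P.B i (P.coroot k) := rfl

instance : P.toRootPairing.IsCrystallographic where
  exists_value i k := by
    obtain ⟨n, hn⟩ := P.integral k k.2 i i.2
    exact ⟨n, by simp [B_coroot, hn]⟩

instance : P.toRootPairing.IsRootSystem :=
  isRootSystem_mk'' (IsValuedIn.exists_value (P := P.toRootPairing) (S := ℤ))

instance : P.toRootPairing.IsReduced where
  eq_or_eq_neg i k h := by
    rw [LinearIndependent.pair_iff' (P.toRootPairing.ne_zero i)] at h
    push Not at h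
    obtain ⟨c, hc⟩ := h
    obtain rfl | rfl := P.reduced i i.2 c (hc ▸ k.2)
    · left; simpa using hc
    · right; simp [← hc]

lemma B_eq_zero_of_mem_of_notMem {q : Submodule ℚ V} {i : P.Φ} {v : V}
    (hq : q ∈ End.invtSubmodule (P.toRootPairing.reflection i).toLinearMap) (hv : v ∈ q)
    (hi : (i : V) ∉ q) : P.B v i = 0 := by
  have hsub : v - P.B v (P.coroot i) • (i : V) ∈ q := hq hv
  have hsmul := (q.sub_mem_iff_right hv).mp hsub
  by_contra hne
  refine hi ((q.smul_mem_iff ?_).mp hsmul)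
  rw [B_coroot, P.B_symm]
  exact div_ne_zero (mul_ne_zero two_ne_zero hne) (P.B_self_pos i).ne'

instance [Nontrivial V] : P.toRootPairing.IsIrreducible := by
  classical
  refine .mk' _ fun q hq hne ↦ ?_
  have hs : {β ∈ P.Φ | β ∈ q} = P.Φ := by
    refine P.irreducible _ (Finset.filter_subset _ _) ?_ ?_
    · by_contra hempty
      refine hne (q.eq_bot_iff.mpr fun v hv ↦ P.B_injective ?_)
      refine LinearMap.ext_on P.span_top fun β hβ ↦ ?_
      rw [map_zero]
      refine P.B_eq_zero_of_mem_of_notMem (i := ⟨β, hβ⟩) (hq _) hv fun hβq ↦ hempty ?_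
      exact ⟨β, Finset.mem_filter.mpr ⟨hβ, hβq⟩⟩
    · intro β hβ γ hγ hγs
      simp only [Finset.mem_filter, not_and] at hβ hγs
      exact P.B_eq_zero_of_mem_of_notMem (hq ⟨γ, hγ⟩) hβ.2 (hγs hγ)
  rw [← top_le_iff, ← P.span_top, Submodule.span_le, ← hs]
  exact fun β hβ ↦ (Finset.mem_filter.mp hβ).2

lemma root_image_setOf_mem_simple :
    P.toRootPairing.root '' {i | (i : V) ∈ P.Δ} = P.Δ :=
  Set.Subset.antisymm (by rintro - ⟨i, hi, rfl⟩; exact hi)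
    fun α hα ↦ ⟨⟨α, P.Δ_sub hα⟩, hα, rfl⟩

/-- The base of `P.toRootPairing` consisting of the simple roots `Δ`. -/
noncomputable def base : P.toRootPairing.Base :=
  .mk' P.toRootPairing {i | (i : V) ∈ P.Δ}
    (P.Δ_indep.comp (fun i : {i : P.Φ | (i : V) ∈ P.Δ} ↦ (⟨i, i.2⟩ : P.Δ))
      fun i k h ↦ Subtype.ext (Subtype.ext congr(($h : V))))
    fun i ↦ by
      rw [root_image_setOf_mem_simple]
      exact P.mem_closure_or_neg_mem_closure i

@[simp] lemma mem_base_support {i : P.Φ} : i ∈ P.base.support ↔ (i : V) ∈ P.Δ := by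
  simp [base, Base.mk']

lemma sum_base_support {A : Type*} [AddCommMonoid A] (f : V → A) :
    ∑ j : P.base.support, f j = ∑ α ∈ P.Δ, f α :=
  Finset.sum_bij (fun j _ ↦ j) (fun j _ ↦ P.mem_base_support.mp j.2)
    (fun _ _ _ _ h ↦ Subtype.ext (Subtype.ext h))
    (fun α hα ↦ ⟨⟨⟨α, P.Δ_sub hα⟩, P.mem_base_support.mpr hα⟩, Finset.mem_univ _, rfl⟩)
    fun _ _ ↦ rfl

open BasedRootPairing

lemma coord_eq_of_eq_sum {v : V} {c : P.base.support → ℚ} (h : v = ∑ j, c j • ((j : P.Φ) : V))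
    (j : P.base.support) : P.coord v (j : P.Φ) = c j := by
  have hv := P.coord_spec v
  rw [← P.sum_base_support (fun α ↦ P.coord v α • α)] at hv
  exact congrFun (P.base.linearIndepOn_root.fintypeLinearCombination_injective (hv.symm.trans h)) j

@[simp] lemma coord_root (i : P.Φ) (j : P.base.support) :
    P.coord i (j : P.Φ) = mult P.base i j :=
  P.coord_eq_of_eq_sum (c := fun j ↦ mult P.base i j)
    (by simpa [Int.cast_smul_eq_zsmul] using root_eq_sum_mult (b := P.base) i) j

@[simp] lemma corootMult_root (i : P.Φ) (j : P.base.support) :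
    P.corootMult i (j : P.Φ) = mult P.base.flip i j := by
  have hj := (P.B_self_pos j).ne'
  rw [corootMult, P.coord_eq_of_eq_sum
    (c := fun j ↦ mult P.base.flip i j * (2 / P.B (j : P.Φ) (j : P.Φ)))]
  · field_simp
  · exact (root_eq_sum_mult (b := P.base.flip) i).trans <| Finset.sum_congr rfl fun j _ ↦ by
      rw [mul_smul, Int.cast_smul_eq_zsmul]
      rfl

lemma pairingIn_nonneg_iff (i k : P.Φ) :
    0 ≤ P.toRootPairing.pairingIn ℤ i k ↔ 0 ≤ P.B i k := by
  have hcast : (P.toRootPairing.pairingIn ℤ i k : ℚ) = 2 * P.B k i / P.B k k :=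
    (P.toRootPairing.algebraMap_pairingIn ℤ i k).trans (P.B_coroot i k)
  rw [← Int.cast_nonneg_iff (R := ℚ), hcast, le_div_iff₀ (P.B_self_pos k), zero_mul,
    mul_nonneg_iff_of_pos_left two_pos, P.B_symm]

lemma isDominant_root_iff (i : P.Φ) : P.IsDominant i ↔ BasedRootPairing.IsDominant P.base i :=
  ⟨fun h j hj ↦ (P.pairingIn_nonneg_iff i j).mpr (h j (P.mem_base_support.mp hj)),
    fun h α hα ↦ (P.pairingIn_nonneg_iff i ⟨α, P.Δ_sub hα⟩).mp (h _ (P.mem_base_support.mpr hα))⟩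

lemma forall_mem_simple {p : V → Prop} :
    (∀ α ∈ P.Δ, p α) ↔ ∀ j : P.base.support, p (j : P.Φ) :=
  ⟨fun h j ↦ h j (P.mem_base_support.mp j.2),
    fun h α hα ↦ h ⟨⟨α, P.Δ_sub hα⟩, P.mem_base_support.mpr hα⟩⟩

lemma mem_posRoots_root (i : P.Φ) : (i : V) ∈ P.posRoots ↔ 0 ≤ mult P.base i := by
  rw [posRoots, Finset.mem_filter, and_iff_right i.2, forall_mem_simple]
  exact forall_congr' fun j ↦ by simp

lemma forall_mem_posRoots {p : V → Prop} :
    (∀ β ∈ P.posRoots, p β) ↔ ∀ i : P.Φ, 0 ≤ mult P.base i → p i :=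
  ⟨fun h i hi ↦ h i ((P.mem_posRoots_root i).mpr hi), fun h β hβ ↦
    h ⟨β, (Finset.mem_filter.mp hβ).1⟩ ((P.mem_posRoots_root _).mp hβ)⟩

lemma isHighestRoot_root_iff (i : P.Φ) : P.IsHighestRoot i ↔ IsHighest P.base i := by
  rw [IsHighestRoot, and_iff_right i.2, forall_mem_posRoots, isHighest_iff_forall_nonneg]
  refine forall₂_congr fun k _ ↦ ?_
  simp [forall_mem_simple, Pi.le_def]

lemma isDualHighest_root_iff (i : P.Φ) : P.IsDualHighest i ↔ IsHighest P.base.flip i := by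
  rw [IsDualHighest, and_iff_right i.2, forall_mem_posRoots, isHighest_iff_forall_nonneg]
  simp only [mult_flip_nonneg_iff, forall_mem_simple, corootMult_root, Int.cast_le]
  rfl

lemma forall_isHighestRoot {p : V → Prop} :
    (∀ β, P.IsHighestRoot β → p β) ↔ ∀ i : P.Φ, IsHighest P.base i → p i :=
  ⟨fun h i hi ↦ h i ((P.isHighestRoot_root_iff i).mpr hi),
    fun h β hβ ↦ h ⟨β, hβ.1⟩ ((P.isHighestRoot_root_iff ⟨β, hβ.1⟩).mp hβ)⟩

lemma forall_isDualHighest {p : V → Prop} :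
    (∀ β, P.IsDualHighest β → p β) ↔ ∀ i : P.Φ, IsHighest P.base.flip i → p i :=
  ⟨fun h i hi ↦ h i ((P.isDualHighest_root_iff i).mpr hi),
    fun h β hβ ↦ h ⟨β, hβ.1⟩ ((P.isDualHighest_root_iff ⟨β, hβ.1⟩).mp hβ)⟩

lemma isSpecial_simple_iff [Nontrivial V] (j : P.base.support) :
    P.IsSpecial (j : P.Φ) ↔ BasedRootPairing.IsSpecial P.base j := by
  rw [IsSpecial, and_iff_right (P.mem_base_support.mp j.2), forall_isHighestRoot,
    isSpecial_iff_forall_isHighest]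
  simp

lemma isCospecial_simple_iff [Nontrivial V] (j : P.base.support) :
    P.IsCospecial (j : P.Φ) ↔ BasedRootPairing.IsSpecial P.base.flip j := by
  have := isReduced_flip (P := P.toRootPairing)
  rw [IsCospecial, and_iff_right (P.mem_base_support.mp j.2), forall_isDualHighest]
  exact Iff.trans (by simp) (isSpecial_iff_forall_isHighest (b := P.base.flip)).symm

lemma refl_root (l i : P.Φ) : P.refl l i = (P.toRootPairing.reflectionPerm l i : V) := by
  rw [refl_apply]
  exact (P.toRootPairing.root_reflectionPerm l i).symm

lemma refl_coroot (l i : P.Φ) :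
    P.refl l (P.coroot i) = P.coroot (P.toRootPairing.reflectionPerm l i : V) := by
  have hroot : P.B (P.coroot i) (P.coroot l) • (l : V) = P.B l (P.coroot i) • P.coroot l := by
    simp only [coroot, map_smul, LinearMap.smul_apply, smul_smul, smul_eq_mul, P.B_symm i l]
    congr 1
    ring
  rw [refl_apply, hroot]
  exact (P.toRootPairing.coroot_reflectionPerm l i).symm

lemma apply_eq_of_mem_closure_refl_prod {s : Set P.Φ} {g : (V ≃ₗ[ℚ] V) × Equiv.Perm P.Φ}
    (hg : g ∈ Subgroup.closure ((fun l : P.Φ ↦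
      (P.refl l, P.toRootPairing.reflectionPerm l)) '' s)) (i : P.Φ) :
    g.1 i = (g.2 i : V) ∧ g.1 (P.coroot i) = P.coroot (g.2 i) := by
  induction hg using Subgroup.closure_induction generalizing i with
  | mem _ h => obtain ⟨l, -, rfl⟩ := h; exact ⟨P.refl_root l i, P.refl_coroot l i⟩
  | one => exact ⟨rfl, rfl⟩
  | mul g g' _ _ hg hg' =>
    simp [(hg' i).1, (hg' i).2, (hg (g'.2 i)).1, (hg (g'.2 i)).2]
  | inv g _ hg =>
    have := hg (g.2⁻¹ i)
    rw [← Equiv.Perm.mul_apply, mul_inv_cancel, Equiv.Perm.one_apply] at this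
    exact ⟨g.1.symm_apply_eq.mpr this.1.symm, g.1.symm_apply_eq.mpr this.2.symm⟩

/- `K` is the graph of the action on the roots of the group generated by the reflections in `s`. -/
lemma exists_subgroup_map_fst_map_snd (s : Set P.Φ) :
    ∃ K : Subgroup ((V ≃ₗ[ℚ] V) × Equiv.Perm P.Φ),
      K.map (.fst _ _) = Subgroup.closure ((fun l : P.Φ ↦ P.refl l) '' s) ∧
      K.map (.snd _ _) = reflectionGroup P.toRootPairing s ∧
      ∀ g ∈ K, ∀ i : P.Φ, g.1 i = (g.2 i : V) ∧ g.1 (P.coroot i) = P.coroot (g.2 i) := by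
  refine ⟨_, ?_, ?_, fun g hg ↦ P.apply_eq_of_mem_closure_refl_prod (s := s) hg⟩ <;>
    rw [MonoidHom.map_closure, Set.image_image] <;> rfl

lemma exists_mem_reflectionGroup {s : Set P.Φ} {g : V ≃ₗ[ℚ] V}
    (hg : g ∈ Subgroup.closure ((fun l : P.Φ ↦ P.refl l) '' s)) :
    ∃ w ∈ reflectionGroup P.toRootPairing s,
      ∀ i : P.Φ, g i = (w i : V) ∧ g (P.coroot i) = P.coroot (w i) := by
  obtain ⟨K, hfst, hsnd, hK⟩ := P.exists_subgroup_map_fst_map_snd s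
  obtain ⟨⟨g, w⟩, hgw, rfl⟩ := hfst ▸ hg
  exact ⟨w, hsnd ▸ ⟨_, hgw, rfl⟩, hK _ hgw⟩

lemma exists_mem_closure_refl {s : Set P.Φ} {w : Equiv.Perm P.Φ}
    (hw : w ∈ reflectionGroup P.toRootPairing s) :
    ∃ g ∈ Subgroup.closure ((fun l : P.Φ ↦ P.refl l) '' s),
      ∀ i : P.Φ, g i = (w i : V) ∧ g (P.coroot i) = P.coroot (w i) := by
  obtain ⟨K, hfst, hsnd, hK⟩ := P.exists_subgroup_map_fst_map_snd s
  obtain ⟨⟨g, w⟩, hgw, rfl⟩ := hsnd ▸ hw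
  exact ⟨g, hfst ▸ ⟨_, hgw, rfl⟩, hK _ hgw⟩

lemma leviWeyl_eq_closure (j : P.base.support) :
    P.leviWeyl (j : P.Φ) =
      Subgroup.closure ((fun l : P.Φ ↦ P.refl l) '' (P.base.support \ {(j : P.Φ)})) := by
  refine congrArg Subgroup.closure (Set.ext fun g ↦ ⟨?_, ?_⟩)
  · rintro ⟨α, hα, hne, rfl⟩
    exact ⟨⟨α, P.Δ_sub hα⟩, ⟨P.mem_base_support.mpr hα, fun h ↦ hne congr(($h : V))⟩, rfl⟩
  · rintro ⟨l, ⟨hl, hne⟩, rfl⟩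
    exact ⟨l, P.mem_base_support.mp hl, fun h ↦ hne (Subtype.ext h), rfl⟩

lemma exists_leviWeyl_isDominant_iff (j : P.base.support) :
    (∃ g ∈ P.leviWeyl (j : P.Φ), P.IsDominant (g (j : P.Φ))) ↔
      ∃ w ∈ reflectionGroup P.toRootPairing (P.base.support \ {(j : P.Φ)}),
        BasedRootPairing.IsDominant P.base (w j) := by
  rw [leviWeyl_eq_closure]
  simp only [← isDominant_root_iff]
  constructor
  · rintro ⟨g, hg, hdom⟩
    obtain ⟨w, hw, h⟩ := P.exists_mem_reflectionGroup hg
    exact ⟨w, hw, (h j).1 ▸ hdom⟩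
  · rintro ⟨w, hw, hdom⟩
    obtain ⟨g, hg, h⟩ := P.exists_mem_closure_refl hw
    exact ⟨g, hg, (h j).1 ▸ hdom⟩

lemma apply_coroot_eq_mult_flip {η : V} {j : P.base.support} [DecidableEq V]
    (hη : ∀ α ∈ P.Δ, P.B η (P.coroot α) = if α = (j : P.Φ) then 1 else 0) (i : P.Φ) :
    P.B η (P.coroot i) = mult P.base.flip i j := by
  have hη' (k : P.base.support) : P.B η (P.coroot (k : P.Φ)) = if k = j then 1 else 0 := by
    rw [hη k (P.mem_base_support.mp k.2)]
    exact if_congr (Subtype.coe_inj.trans Subtype.coe_inj) rfl rfl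
  have h : P.coroot i = ∑ k : P.base.support, mult P.base.flip i k • P.coroot (k : P.Φ) :=
    root_eq_sum_mult (b := P.base.flip) i
  calc P.B η (P.coroot i)
      = ∑ k : P.base.support, mult P.base.flip i k • P.B η (P.coroot (k : P.Φ)) := by
        rw [h, map_sum]
        exact Finset.sum_congr rfl fun k _ ↦ map_zsmul _ _ _
    _ = ∑ k : P.base.support, if k = j then (mult P.base.flip i k : ℚ) else 0 :=
        Finset.sum_congr rfl fun k _ ↦ by rw [hη', smul_ite, smul_zero, zsmul_one]
    _ = mult P.base.flip i j := Fintype.sum_ite_eq' j _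

lemma isQuasiConstant_iff_mult_flip {η : V} {j : P.base.support}
    (hη : ∀ i : P.Φ, P.B η (P.coroot i) = mult P.base.flip i j) :
    P.IsQuasiConstant η ↔
      BasedRootPairing.IsQuasiConstant P.toRootPairing (mult P.base.flip · j) := by
  rw [IsQuasiConstant, weylGroup_eq_closure]
  constructor
  · intro h i hi w hw
    obtain ⟨g, hg, hgw⟩ := P.exists_mem_closure_refl hw
    have := h i i.2 (by simpa [hη] using hi) g hg
    rwa [(hgw i).2, hη, hη, intCast_div_mem_iff hi] at this
  · intro h β hβ hne g hg
    lift β to P.Φ using hβ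
    obtain ⟨w, hw, hgw⟩ := P.exists_mem_reflectionGroup hg
    rw [hη, Int.cast_ne_zero] at hne
    rw [(hgw β).2, hη, hη, intCast_div_mem_iff hne]
    exact h β hne w hw

end RootSystemBase

open RootSystemBase in
/-- **Theorem (quasi-constancy via maximal Levi Weyl groups).**
Let `(V, Φ)` be a reduced irreducible root system with base `Δ` and `α ∈ Δ`.
TFAE: (1) the fundamental weight `η(α)` is quasi-constant; (2) `α` is special or
co-special; (3) `dom(α) = dom_α(α)`, i.e. some `w ∈ W_α` makes `w α` `Δ`-dominant. -/
theorem quasiConstant_iff_special_or_cospecial_iff_leviDominant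
    {V : Type*} [AddCommGroup V] [Module ℚ V] [FiniteDimensional ℚ V] [DecidableEq V]
    (P : RootSystemBase V) (α : V) (hα : α ∈ P.Δ)
    (η : V) (hη : ∀ α' ∈ P.Δ, P.B η (P.coroot α') = if α' = α then 1 else 0) :
    (P.IsQuasiConstant η ↔ (P.IsSpecial α ∨ P.IsCospecial α)) ∧
    ((P.IsSpecial α ∨ P.IsCospecial α) ↔ ∃ w ∈ P.leviWeyl α, P.IsDominant (w α)) := by
  obtain ⟨j, rfl⟩ : ∃ j : P.base.support, ((j : P.Φ) : V) = α :=
    ⟨⟨⟨α, P.Δ_sub hα⟩, P.mem_base_support.mpr hα⟩, rfl⟩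
  have : Nontrivial V := nontrivial_of_ne _ 0 (P.toRootPairing.ne_zero j)
  rw [P.isSpecial_simple_iff, P.isCospecial_simple_iff, P.exists_leviWeyl_isDominant_iff,
    P.isQuasiConstant_iff_mult_flip (P.apply_coroot_eq_mult_flip hη)]
  exact ⟨BasedRootPairing.isQuasiConstant_iff j,
    BasedRootPairing.isSpecial_or_isSpecial_flip_iff_exists_isDominant j⟩
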